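/- arXiv:1809.07808 — 4 statements merged into one kernel-verified Lean document; each statement's English description precedes it below -/
import Mathlib

section
/- Let A be a unital C*-algebra, t ∈ A and ε > 0. If t is ε-almost regular, then dist(t, R(A)) ≤ ε. -/
noncomputable section

/-- A closed two-sided ideal of a topological `ℂ`-algebra `A`. -/
structure ClosedIdeal (A : Type*) [NonUnitalNonAssocRing A] [Module ℂ A] [TopologicalSpace A] : Type _ where
  carrier : Submodule ℂ A
  mul_left_mem : ∀ (a x : A), x ∈ carrier → a * x ∈ carrier
  mul_right_mem : ∀ (a x : A), x ∈ carrier → x * a ∈ carrier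
  isClosed : IsClosed (carrier : Set A)

/-- `GL(A)`, the set of invertible elements of the unital algebra `A`. -/
def glSet (A : Type*) [Monoid A] : Set A := {a | IsUnit a}

/-- `R(A)`: the set of elements `a` of a unital algebra `A` such that for every closed
two-sided ideal `I`, if the image of `a` in `A/I` is left- or right-invertible, then it is
invertible.  (The image of `a` in `A/I` is left invertible iff `1 - b * a ∈ I` for some `b`,
right invertible iff `1 - a * b ∈ I` for some `b`, and invertible iff both hold for one `b`.) -/
def regSet (A : Type*) [Ring A] [Module ℂ A] [TopologicalSpace A] : Set A :=
  {a | ∀ I : ClosedIdeal A,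
    ((∃ b, 1 - b * a ∈ I.carrier) ∨ (∃ b, 1 - a * b ∈ I.carrier)) →
    ∃ b, 1 - b * a ∈ I.carrier ∧ 1 - a * b ∈ I.carrier}

/-- `|t| = (t* t)^(1/2)`, via the continuous functional calculus. -/
noncomputable def cstarAbs {A : Type*} [CStarAlgebra A] (t : A) : A :=
  cfc Real.sqrt (star t * t)

/-- `t` is `ε`-almost regular: the closed two-sided ideal generated by `f_ε(|t|)` equals the
closed two-sided ideal generated by `f_ε(|t*|)`, where `f_ε(x) = max (ε - x) 0`.  (Two elements
generate the same closed two-sided ideal iff they belong to exactly the same closed two-sided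
ideals.) -/
def AlmostRegular {A : Type*} [CStarAlgebra A] (ε : ℝ) (t : A) : Prop :=
  ∀ I : ClosedIdeal A,
    (cfc (fun x : ℝ => max (ε - x) 0) (cstarAbs t) ∈ I.carrier ↔
     cfc (fun x : ℝ => max (ε - x) 0) (cstarAbs (star t)) ∈ I.carrier)

section helpers
variable {A : Type*} [CStarAlgebra A]

lemma aux_pow_left (I : ClosedIdeal A) (c g : A) (h : 1 - c * g ∈ I.carrier) (n : ℕ) :
    1 - c ^ n * g ^ n ∈ I.carrier := by
  induction n with
  | zero => simp
  | succ n ih =>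
    have : 1 - c ^ (n+1) * g ^ (n+1) = (1 - c^n * g^n) + c^n * ((1 - c * g) * g^n) := by
      rw [pow_succ c, pow_succ' g]; noncomm_ring
    rw [this]
    exact I.carrier.add_mem ih (I.mul_left_mem _ _ (I.mul_right_mem _ _ h))

lemma aux_cfc_pow (g : A) (hg : IsSelfAdjoint g) (φ : ℝ → ℝ) (hφ : Continuous φ) (n : ℕ) :
    g ^ n * cfc φ g = cfc (fun x => x ^ n * φ x) g := by
  rw [cfc_mul (fun x : ℝ => x ^ n) φ g (by fun_prop) (by fun_prop), cfc_pow_id g n]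

lemma aux_phi_bound (δ : ℝ) (hδ : 0 < δ) (n : ℕ) (x : ℝ) :
    ‖x ^ n * (1 - x * (x / max (x ^ 2) (δ ^ 2)))‖ ≤ δ ^ n := by
  have hm : 0 < max (x ^ 2) (δ ^ 2) := lt_max_of_lt_right (by positivity)
  rw [norm_mul, norm_pow, Real.norm_eq_abs, Real.norm_eq_abs]
  rcases le_total δ |x| with h | h
  · have h2 : δ ^ 2 ≤ x ^ 2 := by rw [← sq_abs x]; gcongr
    rw [max_eq_left h2] at hm ⊢
    have : 1 - x * (x / x ^ 2) = 0 := by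
      have : x ≠ 0 := by rintro rfl; simp at hm
      field_simp; simp
    rw [this]; simp; positivity
  · have h2 : x ^ 2 ≤ δ ^ 2 := by rw [← sq_abs x]; gcongr
    rw [max_eq_right h2]
    have h3 : x * (x / δ ^ 2) = x ^ 2 / δ ^ 2 := by ring
    have h4 : x ^ 2 / δ ^ 2 ≤ 1 := by rw [div_le_one (by positivity)]; exact h2
    have h5 : 0 ≤ x ^ 2 / δ ^ 2 := by positivity
    have h6 : |1 - x * (x / δ ^ 2)| ≤ 1 := by rw [h3, abs_le]; constructor <;> linarith
    calc |x| ^ n * _ ≤ δ ^ n * 1 := by gcongr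
      _ = _ := mul_one _

lemma aux_cont (δ : ℝ) (hδ : 0 < δ) : Continuous (fun x : ℝ => x / max (x ^ 2) (δ ^ 2)) := by
  refine Continuous.div (by fun_prop) (by fun_prop) fun x => ?_
  exact (lt_max_of_lt_right (by positivity)).ne'

lemma aux_lim (I : ClosedIdeal A) (y : A) (z : ℕ → A) (r C : ℝ) (hr0 : 0 ≤ r) (hr : r < 1)
    (hz : ∀ n, y - z n ∈ I.carrier) (hb : ∀ n, ‖z n‖ ≤ r ^ n * C) : y ∈ I.carrier := by
  have h1 : Filter.Tendsto z Filter.atTop (nhds 0) := by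
    apply squeeze_zero_norm hb
    simpa using (tendsto_pow_atTop_nhds_zero_of_lt_one hr0 hr).mul_const C
  have h2 : Filter.Tendsto (fun n => y - z n) Filter.atTop (nhds y) := by
    simpa using h1.const_sub y
  exact I.isClosed.mem_of_tendsto h2 (Filter.Eventually.of_forall hz)

lemma aux_sa_inv (I : ClosedIdeal A) (g c : A) (hg : IsSelfAdjoint g)
    (h : 1 - c * g ∈ I.carrier ∨ 1 - g * c ∈ I.carrier) :
    ∃ m, 1 - m * g ∈ I.carrier ∧ 1 - g * m ∈ I.carrier := by
  set δ : ℝ := 1 / (2 * (‖c‖ + 1)) with hδd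
  have hc := norm_nonneg c
  have hδ : 0 < δ := by positivity
  have hr : ‖c‖ * δ < 1 := by
    rw [hδd, mul_one_div, div_lt_one (by positivity)]; linarith
  have hcont := aux_cont δ hδ
  have hφc : Continuous (fun x : ℝ => 1 - x * (x / max (x ^ 2) (δ ^ 2))) := by fun_prop
  have e1 : 1 - g * cfc (fun x : ℝ => x / max (x ^ 2) (δ ^ 2)) g
      = cfc (fun x : ℝ => 1 - x * (x / max (x ^ 2) (δ ^ 2))) g := by
    have := aux_cfc_pow g hg _ hcont 1
    simp only [pow_one] at this
    rw [this, cfc_sub (fun _ : ℝ => (1 : ℝ)) (fun x : ℝ => x * (x / max (x ^ 2) (δ ^ 2))) g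
      (by fun_prop) (by fun_prop), cfc_const_one ℝ g]
  have e2 : cfc (fun x : ℝ => x / max (x ^ 2) (δ ^ 2)) g * g
      = g * cfc (fun x : ℝ => x / max (x ^ 2) (δ ^ 2)) g :=
    (cfc_commute_cfc (fun x : ℝ => x / max (x ^ 2) (δ ^ 2)) (fun x : ℝ => x) g).eq.trans (by
      simp [cfc_id' ℝ g]) |> fun h => by rw [cfc_id' ℝ g] at h; exact h
  have key : cfc (fun x : ℝ => 1 - x * (x / max (x ^ 2) (δ ^ 2))) g ∈ I.carrier := by
    set y := cfc (fun x : ℝ => 1 - x * (x / max (x ^ 2) (δ ^ 2))) g with hy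
    have hyb : ∀ n : ℕ, ‖g ^ n * y‖ ≤ δ ^ n := fun n => by
      rw [hy, aux_cfc_pow g hg _ hφc n]
      exact norm_cfc_le (by positivity) fun x _ => aux_phi_bound δ hδ n x
    have hcomm : ∀ n : ℕ, g ^ n * y = y * g ^ n := fun n => by
      have : Commute g y := by
        have := cfc_commute_cfc (fun x : ℝ => x) (fun x : ℝ => 1 - x * (x / max (x ^ 2) (δ ^ 2))) g
        rwa [cfc_id' ℝ g] at this
      exact (this.pow_left n).eq
    have hcn : ∀ n : ℕ, 1 ≤ n → ‖c ^ n‖ ≤ ‖c‖ ^ n := fun n hn => norm_pow_le' c hn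
    rcases h with h | h
    · refine aux_lim I y (fun n => c ^ (n+1) * g ^ (n+1) * y) (‖c‖ * δ) (‖c‖ * δ)
        (by positivity) hr (fun n => ?_) (fun n => ?_)
      · have := I.mul_right_mem y _ (aux_pow_left I c g h (n+1))
        simpa [sub_mul] using this
      · rw [← pow_succ, mul_pow, mul_assoc]
        exact (norm_mul_le _ _).trans (mul_le_mul (hcn _ (by omega)) (hyb _) (norm_nonneg _)
          (by positivity))
    · refine aux_lim I y (fun n => y * (g ^ (n+1) * c ^ (n+1))) (‖c‖ * δ) (‖c‖ * δ)
        (by positivity) hr (fun n => ?_) (fun n => ?_)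
      · have := I.mul_left_mem y _ (aux_pow_left I g c h (n+1))
        simpa [mul_sub] using this
      · rw [← pow_succ, mul_pow, ← mul_assoc, ← hcomm, mul_comm (‖c‖ ^ _)]
        exact (norm_mul_le _ _).trans (mul_le_mul (hyb _) (hcn _ (by omega)) (norm_nonneg _)
          (by positivity))
  refine ⟨cfc (fun x : ℝ => x / max (x ^ 2) (δ ^ 2)) g, ?_, ?_⟩
  · rw [e2, e1]; exact key
  · rw [e1]; exact key

lemma aux_poly (t : A) (P : Polynomial ℝ) :
    t * Polynomial.aeval (star t * t) P = Polynomial.aeval (t * star t) P * t := by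
  induction P using Polynomial.induction_on' with
  | add p q hp hq => simp [mul_add, add_mul, hp, hq]
  | monomial n a =>
    have : t * (star t * t) ^ n = (t * star t) ^ n * t := by
      induction n with
      | zero => simp
      | succ n ih => rw [pow_succ, ← mul_assoc, ih, pow_succ]; simp only [mul_assoc]
    simp only [Polynomial.aeval_monomial]
    rw [← mul_assoc, ← Algebra.commutes a t, mul_assoc, this, mul_assoc]

lemma aux_near (q : A) (hq : IsSelfAdjoint q) (f : ℝ → ℝ) (hf : Continuous f) (P : Polynomial ℝ)
    (R η : ℝ) (hη : 0 ≤ η) (hR : ∀ x ∈ spectrum ℝ q, x ∈ Set.Icc (-R) R)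
    (hP : ∀ x ∈ Set.Icc (-R) R, |P.eval x - f x| < η) :
    ‖Polynomial.aeval q P - cfc f q‖ ≤ η := by
  rw [← cfc_polynomial P q, ← cfc_sub (fun x => P.eval x) f q (by fun_prop) (by fun_prop)]
  exact norm_cfc_le hη fun x hx => (hP x (hR x hx)).le

lemma aux_spec (q : A) : ∃ R : ℝ, ∀ x ∈ spectrum ℝ q, x ∈ Set.Icc (-R) R := by
  obtain ⟨R, hR⟩ := (spectrum.isBounded (𝕜 := ℝ) q).exists_norm_le
  exact ⟨R, fun x hx => abs_le.1 (hR x hx)⟩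

lemma aux_intertwine (t : A) (f : ℝ → ℝ) (hf : Continuous f) :
    t * cfc f (star t * t) = cfc f (t * star t) * t := by
  obtain ⟨R1, h1⟩ := aux_spec (star t * t)
  obtain ⟨R2, h2⟩ := aux_spec (t * star t)
  set R := max R1 R2
  have h1' : ∀ x ∈ spectrum ℝ (star t * t), x ∈ Set.Icc (-R) R := fun x hx =>
    Set.Icc_subset_Icc (neg_le_neg (le_max_left _ _)) (le_max_left _ _) (h1 x hx)
  have h2' : ∀ x ∈ spectrum ℝ (t * star t), x ∈ Set.Icc (-R) R := fun x hx =>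
    Set.Icc_subset_Icc (neg_le_neg (le_max_right _ _)) (le_max_right _ _) (h2 x hx)
  rw [← sub_eq_zero, ← norm_le_zero_iff]
  refine le_of_forall_pos_le_add fun e he => ?_
  set η := e / (2 * (‖t‖ + 1)) with hηd
  have ht := norm_nonneg t
  have hη : 0 < η := by positivity
  obtain ⟨P, hP⟩ := exists_polynomial_near_of_continuousOn (-R) R f hf.continuousOn η hη
  have n1 := aux_near _ (IsSelfAdjoint.star_mul_self t) f hf P R η hη.le h1' hP
  have n2 := aux_near _ (IsSelfAdjoint.mul_star_self t) f hf P R η hη.le h2' hP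
  have : t * cfc f (star t * t) - cfc f (t * star t) * t
      = (Polynomial.aeval (t * star t) P - cfc f (t * star t)) * t
        - t * (Polynomial.aeval (star t * t) P - cfc f (star t * t)) := by
    rw [mul_sub, sub_mul, aux_poly]; abel
  rw [this, zero_add]
  calc _ ≤ ‖(Polynomial.aeval (t * star t) P - cfc f (t * star t)) * t‖
        + ‖t * (Polynomial.aeval (star t * t) P - cfc f (star t * t))‖ := norm_sub_le _ _
    _ ≤ η * ‖t‖ + ‖t‖ * η := by
        gcongr
        · exact (norm_mul_le _ _).trans (by gcongr)
        · exact (norm_mul_le _ _).trans (by gcongr)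
    _ ≤ η * (2 * (‖t‖ + 1)) := by nlinarith
    _ = e := by rw [hηd]; field_simp

lemma aux_F (t : A) (ε : ℝ) : cfc (fun x : ℝ => max (ε - x) 0) (cstarAbs t)
    = cfc (fun x : ℝ => max (ε - √x) 0) (star t * t) := by
  rw [cstarAbs, ← cfc_comp' (fun x : ℝ => max (ε - x) 0) Real.sqrt (star t * t)
    (by fun_prop) (by fun_prop)]

lemma aux_contG (ε : ℝ) (hε : 0 < ε) : Continuous (fun x : ℝ => ε / max (√x) ε) := by
  refine Continuous.div (by fun_prop) (by fun_prop) fun x => ?_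
  exact (lt_max_of_lt_right hε).ne'

lemma aux_contK (ε : ℝ) (hε : 0 < ε) : Continuous (fun x : ℝ => 1 / max x (ε ^ 2)) := by
  refine Continuous.div (by fun_prop) (by fun_prop) fun x => ?_
  exact (lt_max_of_lt_right (by positivity)).ne'

lemma aux_FG (ε : ℝ) (hε : 0 < ε) (x : ℝ) :
    (1 - ε / max (√x) ε) * max (ε - √x) 0 = 0 := by
  rcases le_total (√x) ε with h | h
  · rw [max_eq_right h, div_self hε.ne']; simp
  · rw [max_eq_right (sub_nonpos.2 h)]; simp

lemma aux_GF (q : A) (ε : ℝ) (hε : 0 < ε) :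
    cfc (fun x : ℝ => 1 - ε / max (√x) ε) q * cfc (fun x : ℝ => max (ε - √x) 0) q = 0 := by
  have := aux_contG ε hε
  rw [← cfc_mul (fun x : ℝ => 1 - ε / max (√x) ε) _ q (continuous_const.sub this).continuousOn (by fun_prop)]
  simp only [aux_FG ε hε]
  exact cfc_const_zero ℝ q

lemma aux_K (ε : ℝ) (hε : 0 < ε) (x : ℝ) (hx : 0 ≤ x) :
    1 - x * (1 / max x (ε ^ 2)) = max (ε - √x) 0 * ((ε + √x) / ε ^ 2) := by
  have hs := Real.sq_sqrt hx
  have h0 := Real.sqrt_nonneg x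
  rcases le_total (√x) ε with h | h
  · rw [max_eq_left (sub_nonneg.2 h), max_eq_right (by rw [← hs]; gcongr)]
    field_simp
    nlinarith
  · have : ε ^ 2 ≤ x := by rw [← hs]; gcongr
    rw [max_eq_right (sub_nonpos.2 h), max_eq_left this]
    have : x ≠ 0 := by have : 0 < ε ^ 2 := by positivity
                       linarith
    field_simp; simp

lemma aux_mem (I : ClosedIdeal A) (q : A) (hq : IsSelfAdjoint q)
    (hs : ∀ x ∈ spectrum ℝ q, 0 ≤ x) (ε : ℝ) (hε : 0 < ε)
    (h : cfc (fun x : ℝ => max (ε - √x) 0) q ∈ I.carrier) :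
    1 - q * cfc (fun x : ℝ => 1 / max x (ε ^ 2)) q ∈ I.carrier ∧
    1 - cfc (fun x : ℝ => 1 / max x (ε ^ 2)) q * q ∈ I.carrier := by
  have hK := aux_contK ε hε
  have e1 : 1 - q * cfc (fun x : ℝ => 1 / max x (ε ^ 2)) q
      = cfc (fun x : ℝ => max (ε - √x) 0) q * cfc (fun x : ℝ => (ε + √x) / ε ^ 2) q := by
    have := aux_cfc_pow q hq _ hK 1
    simp only [pow_one] at this
    rw [this, ← cfc_const_one ℝ q, ← cfc_sub (fun _ : ℝ => (1 : ℝ)) _ q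
      (by fun_prop) (by fun_prop), ← cfc_mul _ _ q (by fun_prop) (by fun_prop)]
    exact cfc_congr fun x hx => aux_K ε hε x (hs x hx)
  have hc : q * cfc (fun x : ℝ => 1 / max x (ε ^ 2)) q
      = cfc (fun x : ℝ => 1 / max x (ε ^ 2)) q * q := by
    have := (cfc_commute_cfc (fun x : ℝ => x) (fun x : ℝ => 1 / max x (ε ^ 2)) q).eq
    rwa [cfc_id' ℝ q] at this
  rw [← hc, e1]
  exact ⟨I.mul_right_mem _ _ h, I.mul_right_mem _ _ h⟩

/-- left inverse and right inverse give a two-sided inverse -/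
lemma aux_two (I : ClosedIdeal A) (a b c : A) (hb : 1 - b * a ∈ I.carrier)
    (hc : 1 - a * c ∈ I.carrier) : ∃ d, 1 - d * a ∈ I.carrier ∧ 1 - a * d ∈ I.carrier := by
  refine ⟨b, hb, ?_⟩
  have : 1 - a * b = (1 - a * c) - a * b * (1 - a * c) + a * ((1 - b * a) * c) := by noncomm_ring
  rw [this]
  exact I.carrier.add_mem (I.carrier.sub_mem hc (I.mul_left_mem _ _ hc))
    (I.mul_left_mem _ _ (I.mul_right_mem _ _ hb))

lemma aux_prod (I : ClosedIdeal A) (a b c d : A) (hb : 1 - b * a ∈ I.carrier)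
    (hd : 1 - d * c ∈ I.carrier) : 1 - (d * b) * (a * c) ∈ I.carrier := by
  have : 1 - (d * b) * (a * c) = (1 - d * c) + d * ((1 - b * a) * c) := by noncomm_ring
  rw [this]
  exact I.carrier.add_mem hd (I.mul_left_mem _ _ (I.mul_right_mem _ _ hb))

lemma aux_t_inv (I : ClosedIdeal A) (t : A) (ε : ℝ) (hε : 0 < ε)
    (hp : cfc (fun x : ℝ => max (ε - √x) 0) (star t * t) ∈ I.carrier)
    (hq : cfc (fun x : ℝ => max (ε - √x) 0) (t * star t) ∈ I.carrier) :
    ∃ s, 1 - s * t ∈ I.carrier ∧ 1 - t * s ∈ I.carrier := by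
  have h1 := (aux_mem I _ (IsSelfAdjoint.star_mul_self t)
    (fun x hx => spectrum_star_mul_self_nonneg x hx) ε hε hp).2
  have h2 := (aux_mem I _ (IsSelfAdjoint.mul_star_self t) (fun x hx => by
    have := spectrum_star_mul_self_nonneg (b := star t) x
    rw [star_star] at this; exact this hx) ε hε hq).1
  rw [← mul_assoc] at h1
  rw [mul_assoc] at h2
  exact aux_two I t _ _ h1 h2

lemma aux_norm (t : A) (ε : ℝ) (hε : 0 < ε) :
    ‖t * cfc (fun x : ℝ => ε / max (√x) ε) (star t * t)‖ ≤ ε := by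
  have hG := aux_contG ε hε
  have hp := IsSelfAdjoint.star_mul_self t
  set u := cfc (fun x : ℝ => ε / max (√x) ε) (star t * t) with hu
  have hus : star u = u := (cfc_predicate (fun x : ℝ => ε / max (√x) ε) (star t * t)).star_eq
  have e : star (t * u) * (t * u)
      = cfc (fun x : ℝ => (ε / max (√x) ε) * (x * (ε / max (√x) ε))) (star t * t) := by
    have := aux_cfc_pow _ hp _ hG 1
    simp only [pow_one] at this
    rw [cfc_mul (fun x : ℝ => ε / max (√x) ε) (fun x : ℝ => x * (ε / max (√x) ε)) _ hG.continuousOn (continuous_id.mul hG).continuousOn, ← this, ← hu, star_mul, hus]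
    simp only [mul_assoc]
  have h2 : ‖t * u‖ * ‖t * u‖ ≤ ε ^ 2 := by
    rw [← CStarRing.norm_star_mul_self, e]
    refine norm_cfc_le (by positivity) fun x hx => ?_
    have hx0 : 0 ≤ x := spectrum_star_mul_self_nonneg x hx
    have hs := Real.sq_sqrt hx0
    have h0 := Real.sqrt_nonneg x
    have hm : 0 < max (√x) ε := lt_max_of_lt_right hε
    rw [Real.norm_of_nonneg (by positivity)]
    have : ε / max (√x) ε * (x * (ε / max (√x) ε)) = ε ^ 2 * (x / (max (√x) ε) ^ 2) := by
      field_simp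
    rw [this]
    have : x / (max (√x) ε) ^ 2 ≤ 1 := by
      rw [div_le_one (by positivity)]
      calc x = (√x) ^ 2 := hs.symm
        _ ≤ _ := by gcongr; exact le_max_left _ _
    have h3 : 0 < ε ^ 2 := by positivity
    nlinarith
  rw [← pow_two] at h2
  exact le_of_sq_le_sq h2 hε.le

end helpers

/-- If `t` is `ε`-almost regular, then `dist(t, R(A)) ≤ ε`. -/
theorem almostRegular_infDist_regSet_le {A : Type*} [CStarAlgebra A] (t : A) (ε : ℝ)
    (hε : 0 < ε) (h : AlmostRegular ε t) :
    Metric.infDist t (regSet A) ≤ ε := by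
  have hG := aux_contG ε hε
  have hGc : Continuous (fun x : ℝ => 1 - ε / max (√x) ε) := by fun_prop
  set a := t * cfc (fun x : ℝ => 1 - ε / max (√x) ε) (star t * t) with ha
  have ha' : a = cfc (fun x : ℝ => 1 - ε / max (√x) ε) (t * star t) * t :=
    aux_intertwine t _ hGc
  have hd : dist t a ≤ ε := by
    rw [dist_eq_norm]
    have : t - a = t * cfc (fun x : ℝ => ε / max (√x) ε) (star t * t) := by
      rw [ha, cfc_sub (fun _ : ℝ => (1 : ℝ)) _ _ (by fun_prop) hG.continuousOn,
        cfc_const_one ℝ (star t * t), mul_sub, mul_one, sub_sub_cancel]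
    rw [this]
    exact aux_norm t ε hε
  refine (Metric.infDist_le_dist_of_mem ?_).trans hd
  intro I hI
  have hI' := h I
  rw [aux_F, aux_F, star_star] at hI'
  rcases hI with ⟨b, hb⟩ | ⟨b, hb⟩
  · have hp : cfc (fun x : ℝ => max (ε - √x) 0) (star t * t) ∈ I.carrier := by
      have := I.mul_right_mem (cfc (fun x : ℝ => max (ε - √x) 0) (star t * t)) _ hb
      rwa [sub_mul, one_mul, mul_assoc, ha, mul_assoc, aux_GF _ ε hε, mul_zero, mul_zero,
        sub_zero] at this
    obtain ⟨s, hs1, hs2⟩ := aux_t_inv I t ε hε hp (hI'.1 hp)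
    obtain ⟨m, hm1, hm2⟩ := aux_sa_inv I (cfc (fun x : ℝ => 1 - ε / max (√x) ε) (star t * t))
      (b * t) (cfc_predicate _ _) (Or.inl (by rw [mul_assoc]; exact hb))
    exact ⟨m * s, aux_prod I _ _ _ _ hs1 hm1, aux_prod I _ _ _ _ hm2 hs2⟩
  · have hq : cfc (fun x : ℝ => max (ε - √x) 0) (t * star t) ∈ I.carrier := by
      have := I.mul_left_mem (cfc (fun x : ℝ => max (ε - √x) 0) (t * star t)) _ hb
      have hc := (cfc_commute_cfc (fun x : ℝ => max (ε - √x) 0)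
        (fun x : ℝ => 1 - ε / max (√x) ε) (t * star t)).eq
      rwa [mul_sub, mul_one, ← mul_assoc, ha', ← mul_assoc, hc, aux_GF _ ε hε, zero_mul, zero_mul,
        sub_zero] at this
    obtain ⟨s, hs1, hs2⟩ := aux_t_inv I t ε hε (hI'.2 hq) hq
    obtain ⟨m, hm1, hm2⟩ := aux_sa_inv I (cfc (fun x : ℝ => 1 - ε / max (√x) ε) (t * star t))
      (t * b) (cfc_predicate _ _) (Or.inr (by rw [← mul_assoc, ← ha']; exact hb))
    rw [ha']
    exact ⟨s * m, aux_prod I _ _ _ _ hm1 hs1, aux_prod I _ _ _ _ hs2 hm2⟩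
end
end

section
/- Let B be a proper hereditary C*-subalgebra of a unital C*-algebra A, and let B + ℂ1 denote the unital C*-subalgebra of A spanned by B and the identity. If t ∈ 1 + B (i.e. t = 1 + b for some b ∈ B) and t lies in the norm closure of GL(A), then t lies in the norm closure of GL(B + ℂ1), the group of elements of B + ℂ1 invertible with inverse in B + ℂ1. -/
noncomputable section

/-- `B` is a hereditary subalgebra of `A`: whenever `a ∈ A`, `b ∈ B` and `0 ≤ a ≤ b`,
then `a ∈ B`. -/
def IsHereditary {A : Type*} [NonUnitalNonAssocSemiring A] [Module ℂ A] [Star A]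
    [PartialOrder A] (B : NonUnitalStarSubalgebra ℂ A) : Prop :=
  ∀ a : A, ∀ b ∈ B, 0 ≤ a → a ≤ b → a ∈ B

/-- The set `B + ℂ1` inside a unital algebra `A`. -/
def plusOneSet {A : Type*} [NonUnitalNonAssocSemiring A] [Module ℂ A] [Star A] [One A]
    (B : NonUnitalStarSubalgebra ℂ A) : Set A :=
  {x | ∃ b ∈ B, ∃ c : ℂ, x = b + c • (1 : A)}

theorem conj_mem_of_isHereditary {A : Type*} [CStarAlgebra A] [PartialOrder A]
    [StarOrderedRing A] (B : NonUnitalStarSubalgebra ℂ A)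
    (hBher : IsHereditary B) (x : A) (hx : x ∈ B) (a : A) : x * a * star x ∈ B := by
  have ha : a ∈ Submodule.span ℂ {a : A | 0 ≤ a} := by
    rw [CStarAlgebra.span_nonneg]; trivial
  induction ha using Submodule.span_induction with
  | mem a ha =>
    have ha' : (0 : A) ≤ a := ha
    have h1 : x * a * star x ≤ x * (algebraMap ℝ A ‖a‖) * star x :=
      star_right_conjugate_le_conjugate
        (IsSelfAdjoint.le_algebraMap_norm_self (IsSelfAdjoint.of_nonneg ha')) x
    refine hBher _ _ ?_ (star_right_conjugate_nonneg ha' x) h1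
    have : x * (algebraMap ℝ A ‖a‖) * star x = (‖a‖ : ℂ) • (x * star x) := by
      simp [Algebra.algebraMap_eq_smul_one]
    rw [this]
    exact SMulMemClass.smul_mem _ (mul_mem hx (star_mem hx))
  | zero => simp
  | add a b _ _ h1 h2 => rw [mul_add, add_mul]; exact add_mem h1 h2
  | smul c a _ h => rw [mul_smul_comm, smul_mul_assoc]; exact SMulMemClass.smul_mem c h

theorem mul_mul_mem_of_isHereditary {A : Type*} [CStarAlgebra A] [PartialOrder A]
    [StarOrderedRing A] (B : NonUnitalStarSubalgebra ℂ A)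
    (hBher : IsHereditary B) (x y : A) (hx : x ∈ B) (hy : y ∈ B) (a : A) : x * a * y ∈ B := by
  have key : ∀ c : ℂ, (x + c • star y) * a * star (x + c • star y) ∈ B := fun c =>
    conj_mem_of_isHereditary B hBher _ (add_mem hx (SMulMemClass.smul_mem c (star_mem hy))) a
  have hx' := conj_mem_of_isHereditary B hBher x hx a
  have hy' := conj_mem_of_isHereditary B hBher (star y) (star_mem hy) a
  have h1 := key 1
  have h2 := key Complex.I
  simp only [star_star, star_add, star_smul, add_mul, mul_add, smul_mul_assoc, mul_smul_comm,
    Complex.star_def, Complex.conj_I, map_one, one_smul] at h1 h2 hy'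
  have e : x * a * y = (1 / 2 : ℂ) •
      ((x * a * star x + star y * a * star x + (x * a * y + star y * a * y))
       + Complex.I • (x * a * star x + Complex.I • (star y * a * star x) +
          (-Complex.I • (x * a * y + Complex.I • (star y * a * y))))
       - (1 + Complex.I) • (x * a * star x) - (1 + Complex.I) • (star y * a * y)) := by
    simp only [smul_add, smul_sub, smul_smul]
    match_scalars <;> ring_nf <;> simp [Complex.I_sq, pow_succ] <;> ring_nf
  rw [e]
  refine SMulMemClass.smul_mem _ (sub_mem (sub_mem (add_mem ?_ (SMulMemClass.smul_mem _ ?_)) (SMulMemClass.smul_mem _ hx'))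
    (SMulMemClass.smul_mem _ hy'))
  · exact h1
  · exact h2

/-- If `B` is a proper hereditary C*-subalgebra of the unital C*-algebra `A`,
`t = 1 + b ∈ 1 + B`, and `t` is a limit of invertibles in `A`, then `t` is a limit of elements
of `B + ℂ1` that are invertible with inverse in `B + ℂ1`. -/
theorem mem_closure_units_plusOne {A : Type*} [CStarAlgebra A] [PartialOrder A]
    [StarOrderedRing A] (B : NonUnitalStarSubalgebra ℂ A) (hBclosed : IsClosed (B : Set A))
    (hBher : IsHereditary B) (hBproper : (B : Set A) ≠ Set.univ)
    (b : A) (hb : b ∈ B) (ht : (1 + b) ∈ closure (glSet A)) :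
    (1 + b) ∈
      closure {x : A | x ∈ plusOneSet B ∧ ∃ y ∈ plusOneSet B, x * y = 1 ∧ y * x = 1} := by
  classical
  have hBB := mul_mul_mem_of_isHereditary B hBher
  let c : A → A := fun s => Ring.inverse (s - b)
  let w : A → A := fun s => 1 + b * (c s - 1)
  let F : A → A := fun s => 1 + Ring.inverse (w s) * b
  have hc1 : c (1 + b) = 1 := by simp [c]
  have hw1 : w (1 + b) = 1 := by simp [w, hc1]
  have hF1 : F (1 + b) = 1 + b := by simp [F, hw1]
  have hinv : ContinuousAt (Ring.inverse : A → A) 1 := by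
    simpa using NormedRing.inverse_continuousAt (1 : Aˣ)
  have hs : ContinuousAt (fun s : A => s - b) (1 + b) := by fun_prop
  have hcc : ContinuousAt c (1 + b) :=
    ContinuousAt.comp' (f := fun s : A => s - b) (by simpa using hinv) hs
  have hwc : ContinuousAt w (1 + b) := by fun_prop
  have hwi : ContinuousAt (fun s => Ring.inverse (w s)) (1 + b) :=
    ContinuousAt.comp' (f := w) (by rw [hw1]; exact hinv) hwc
  have hFc : ContinuousAt F (1 + b) := by fun_prop
  have hU : {a : A | IsUnit a} ∈ nhds (1 : A) := by
    simpa using Units.nhds (1 : Aˣ)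
  have hev1 : ∀ᶠ s in nhds (1 + b), IsUnit (s - b) :=
    hs.eventually (p := fun a => IsUnit a) (by simp only [add_sub_cancel_right]; exact hU)
  have hev2 : ∀ᶠ s in nhds (1 + b), IsUnit (w s) :=
    hwc.eventually (p := fun a => IsUnit a) (by rw [hw1]; exact hU)
  rw [mem_closure_iff_frequently] at ht ⊢
  have hfr := ht.and_eventually (hev1.and hev2)
  have hFt : Filter.Tendsto F (nhds (1 + b)) (nhds (1 + b)) := by
    have := hFc.tendsto
    rwa [hF1] at this
  refine hFt.frequently (hfr.mono ?_)
  rintro s ⟨hsu, h1, h2⟩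
  have hsu : IsUnit s := hsu
  -- `F s` is invertible
  have e1 : w s + b = s * c s := by
    have : (s - b) * c s = 1 := Ring.mul_inverse_cancel _ h1
    have h3 : s * c s = 1 + b * c s := by
      rw [← this]; noncomm_ring
    rw [h3]; simp only [w]; noncomm_ring
  have e2 : F s = Ring.inverse (w s) * (s * c s) := by
    rw [← e1, mul_add, Ring.inverse_mul_cancel _ h2]
  have hFu : IsUnit (F s) := by
    rw [e2]
    exact (h2.ringInverse).mul (hsu.mul h1.ringInverse)
  -- `F s ∈ 1 + B`
  have hx : Ring.inverse (w s) * b ∈ B := by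
    have : Ring.inverse (w s) * b = b - b * ((c s - 1) * Ring.inverse (w s)) * b := by
      have h4 : w s * Ring.inverse (w s) = 1 := Ring.mul_inverse_cancel _ h2
      have h5 : Ring.inverse (w s) = 1 - b * ((c s - 1) * Ring.inverse (w s)) := by
        rw [eq_sub_iff_add_eq]
        calc _ = w s * Ring.inverse (w s) := by
              rw [← mul_assoc, ← one_add_mul]
          _ = 1 := h4
      conv_lhs => rw [h5]
      rw [sub_mul, one_mul]
    rw [this]
    exact sub_mem hb (hBB _ _ hb hb _)
  set x := Ring.inverse (w s) * b with hxd
  have hFx : F s = 1 + x := rfl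
  rw [hFx] at hFu ⊢
  obtain ⟨y, hy1, hy2⟩ := isUnit_iff_exists.mp hFu
  refine ⟨⟨x, hx, 1, by rw [one_smul, add_comm]⟩, y, ⟨x * y * x - x, ?_, 1, ?_⟩, hy1, hy2⟩
  · exact sub_mem (hBB _ _ hx hx _) hx
  · have h6 : y = 1 - x * y := by rw [eq_sub_iff_add_eq, ← hy1]; noncomm_ring
    have h7 : y = 1 - y * x := by rw [eq_sub_iff_add_eq, ← hy2]; noncomm_ring
    rw [one_smul]
    calc y = 1 - x * y := h6
      _ = 1 - x * (1 - y * x) := by rw [← h7]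
      _ = _ := by noncomm_ring
end
end

section
/- Let A be a unital C*-algebra, ε > 0, p a projection in A, and t ∈ A. If t is ε-almost regular, then tp is ε-almost regular. Moreover, if t ∈ R(A), then tp ∈ R(A). -/
noncomputable section

/-- `p` is a projection: self-adjoint and idempotent. -/
def IsProjection {A : Type*} [Mul A] [Star A] (p : A) : Prop :=
  IsSelfAdjoint p ∧ IsIdempotentElem p

section aux
variable {A : Type*} [CStarAlgebra A] [PartialOrder A] [StarOrderedRing A]

theorem aux_hered (I : ClosedIdeal A) (h z : A) (hz : z ∈ I.carrier)
    (hle : star h * h ≤ z) : h ∈ I.carrier := by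
  have hz0 : 0 ≤ z := (star_mul_self_nonneg h).trans hle
  have hzs : IsSelfAdjoint z := .of_nonneg hz0
  have hcl : h ∈ closure (I.carrier : Set A) := by
    rw [Metric.mem_closure_iff]
    intro η hη
    obtain ⟨δ, hδ, hδη⟩ : ∃ δ : ℝ, 0 < δ ∧ δ < η ^ 2 := exists_between (by positivity)
    have hne : ∀ x : ℝ, |x| + δ ≠ 0 := fun x => by positivity
    have hc1 : Continuous (fun x : ℝ => (|x| + δ)⁻¹) := by fun_prop (disch := exact hne _)
    have hcw : Continuous (fun x : ℝ => 1 - (|x| + δ)⁻¹ * x) := by fun_prop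
    set w : A := cfc (fun x : ℝ => 1 - (|x| + δ)⁻¹ * x) z with hw
    have hw1 : w = 1 - cfc (fun x : ℝ => (|x| + δ)⁻¹) z * z := by
      rw [hw, cfc_sub (a := z) (fun _ : ℝ => (1 : ℝ)) (fun x : ℝ => (|x| + δ)⁻¹ * x)
        (by fun_prop) (by fun_prop), cfc_mul (a := z) (fun x : ℝ => (|x| + δ)⁻¹) (fun x => x)
        hc1.continuousOn (by fun_prop), cfc_id' ℝ z, cfc_const_one ℝ z]
    have hws : star w = w := (cfc_predicate (R := ℝ) _ z : IsSelfAdjoint w)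
    refine ⟨h * (cfc (fun x : ℝ => (|x| + δ)⁻¹) z * z),
      I.mul_left_mem _ _ (I.mul_left_mem _ _ hz), ?_⟩
    have e : h - h * (cfc (fun x : ℝ => (|x| + δ)⁻¹) z * z) = h * w := by
      rw [hw1, mul_sub, mul_one]
    rw [dist_eq_norm, e]
    have h1 : star (h * w) * (h * w) ≤ w * z * w := by
      have := star_left_conjugate_le_conjugate hle w
      rw [hws] at this
      calc _ = w * (star h * h) * w := by rw [star_mul, hws]; noncomm_ring
        _ ≤ _ := this
    have h2 : w * z * w = cfc (fun x : ℝ => (1 - (|x| + δ)⁻¹ * x) * x * (1 - (|x| + δ)⁻¹ * x)) z := by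
      rw [cfc_mul (a := z) (fun x : ℝ => (1 - (|x| + δ)⁻¹ * x) * x) _ (by fun_prop) (by fun_prop),
        cfc_mul (a := z) (fun x : ℝ => (1 - (|x| + δ)⁻¹ * x)) (fun x => x) (by fun_prop) (by fun_prop), cfc_id' ℝ z]
    have h3 : ‖w * z * w‖ ≤ δ := by
      rw [h2]
      refine norm_cfc_le hδ.le fun x hx => ?_
      have hx0 : 0 ≤ x := spectrum_nonneg_of_nonneg hz0 hx
      have e2 : 1 - (|x| + δ)⁻¹ * x = δ / (x + δ) := by
        rw [abs_of_nonneg hx0]; field_simp; ring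
      rw [e2, Real.norm_eq_abs, abs_of_nonneg (by positivity)]
      have : δ / (x + δ) * x * (δ / (x + δ)) = δ * (x * δ) / (x + δ) ^ 2 := by field_simp
      rw [this, div_le_iff₀ (by positivity)]
      have : x * δ ≤ (x + δ) ^ 2 := by nlinarith
      gcongr
    have h4 : ‖h * w‖ * ‖h * w‖ ≤ δ := by
      rw [← CStarRing.norm_star_mul_self]
      exact (CStarAlgebra.norm_le_norm_of_nonneg_of_le (star_mul_self_nonneg _) h1).trans h3
    nlinarith [norm_nonneg (h * w)]
  rwa [I.isClosed.closure_eq] at hcl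

theorem aux_char (I : ClosedIdeal A) (ε : ℝ) (hε : 0 < ε) (t : A) :
    cfc (fun x : ℝ => max (ε - x) 0) (cstarAbs t) ∈ I.carrier ↔
      ∃ y ∈ I.carrier, algebraMap ℝ A (ε ^ 2) ≤ star t * t + y := by
  unfold cstarAbs
  have ha0 : 0 ≤ star t * t := star_mul_self_nonneg t
  generalize star t * t = a at *
  have has : IsSelfAdjoint a := .of_nonneg ha0
  have hsp : ∀ x ∈ spectrum ℝ a, 0 ≤ x := fun x hx => spectrum_nonneg_of_nonneg ha0 hx
  rw [← cfc_comp' (fun x : ℝ => max (ε - x) 0) Real.sqrt a]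
  have hpos : ∀ x : ℝ, ε + √x ≠ 0 := fun x => by positivity
  have hci : Continuous (fun x : ℝ => (ε + √x)⁻¹) := by fun_prop (disch := exact hpos _)
  have key : ∀ x : ℝ, 0 ≤ x → max (ε ^ 2 - x) 0 = max (ε - √x) 0 * (ε + √x) := by
    intro x hx
    have : ε ^ 2 - x = (ε - √x) * (ε + √x) := by
      have := Real.sq_sqrt hx
      linear_combination this
    rw [this, max_mul_of_nonneg _ _ (by positivity), zero_mul]
  constructor
  · intro h
    refine ⟨cfc (fun x : ℝ => max (ε ^ 2 - x) 0) a, ?_, ?_⟩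
    · rw [cfc_congr (fun x hx => key x (hsp x hx)),
        cfc_mul (a := a) (fun x : ℝ => max (ε - √x) 0) (fun x => ε + √x) (by fun_prop) (by fun_prop)]
      exact I.mul_right_mem _ _ h
    · have : a + cfc (fun x : ℝ => max (ε ^ 2 - x) 0) a
          = cfc (fun x : ℝ => x + max (ε ^ 2 - x) 0) a := by
        rw [cfc_add (a := a) (fun x : ℝ => x) (fun x : ℝ => max (ε ^ 2 - x) 0) (by fun_prop) (by fun_prop), cfc_id' ℝ a]
      rw [this]
      exact algebraMap_le_cfc _ _ _ fun x _ => by linarith [le_max_left (ε ^ 2 - x) 0]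
  · rintro ⟨y, hy, hle⟩
    set S : A := cfc (fun x : ℝ => √(max (ε ^ 2 - x) 0)) a with hS
    set D : A := cfc (fun x : ℝ => max (ε ^ 2 - x) 0) a with hD
    have hSs : star S = S := (cfc_predicate (R := ℝ) _ a : IsSelfAdjoint S)
    have hDs : star D = D := (cfc_predicate (R := ℝ) _ a : IsSelfAdjoint D)
    have e0 : algebraMap ℝ A (ε ^ 2) - a = cfc (fun x : ℝ => ε ^ 2 - x) a := by
      rw [cfc_sub (a := a) (fun _ : ℝ => ε ^ 2) (fun x => x) (by fun_prop) (by fun_prop),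
        cfc_id' ℝ a, cfc_const _ a]
    have e1 : star D * D = S * (algebraMap ℝ A (ε ^ 2) - a) * S := by
      rw [e0, hDs, hS, hD, ← cfc_mul _ _ a (by fun_prop) (by fun_prop),
        ← cfc_mul _ _ a (by fun_prop) (by fun_prop), ← cfc_mul _ _ a (by fun_prop) (by fun_prop)]
      refine cfc_congr fun x _ => ?_
      have hs := Real.mul_self_sqrt (le_max_right (ε ^ 2 - x) 0)
      have : √(max (ε ^ 2 - x) 0) * (ε ^ 2 - x) * √(max (ε ^ 2 - x) 0) =
        max (ε ^ 2 - x) 0 * (ε ^ 2 - x) := by linear_combination (ε ^ 2 - x) * hs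
      rw [this]
      rcases le_total (ε ^ 2 - x) 0 with h | h
      · simp [max_eq_right h]
      · rw [max_eq_left h]
    have hDI : D ∈ I.carrier := by
      refine aux_hered I D (S * y * S) (I.mul_right_mem _ _ (I.mul_left_mem _ _ hy)) ?_
      rw [e1]
      have := star_left_conjugate_le_conjugate (sub_le_iff_le_add'.2 hle) S
      rwa [hSs] at this
    have : cfc (fun x : ℝ => max (ε - √x) 0) a = D * cfc (fun x : ℝ => (ε + √x)⁻¹) a := by
      rw [hD, ← cfc_mul _ _ a (by fun_prop) hci.continuousOn]
      refine cfc_congr fun x hx => ?_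
      rw [key x (hsp x hx), mul_assoc, mul_inv_cancel₀ (hpos x), mul_one]
    rw [this]
    exact I.mul_right_mem _ _ hDI

theorem aux_inv (I : ClosedIdeal A) (ε : ℝ) (hε : 0 < ε) (a y : A) (hy : y ∈ I.carrier)
    (hle : algebraMap ℝ A (ε ^ 2) ≤ a + y) :
    ∃ b, 1 - b * a ∈ I.carrier ∧ 1 - a * b ∈ I.carrier := by
  have hu : IsUnit (a + y) := by
    refine CStarAlgebra.isUnit_of_le (algebraMap ℝ A (ε ^ 2)) hle ?_
    rw [IsStrictlyPositive.iff_of_unital]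
    refine ⟨algebraMap_nonneg A (by positivity), (IsUnit.mk0 (ε ^ 2) (by positivity)).map _⟩
  obtain ⟨u, hu⟩ := hu
  refine ⟨↑u⁻¹, ?_, ?_⟩
  · have : 1 - ↑u⁻¹ * a = ↑u⁻¹ * y := by
      rw [← u.inv_mul, hu]; noncomm_ring
    rw [this]; exact I.mul_left_mem _ _ hy
  · have : 1 - a * ↑u⁻¹ = y * ↑u⁻¹ := by
      rw [← u.mul_inv, hu]; noncomm_ring
    rw [this]; exact I.mul_right_mem _ _ hy

theorem aux_main (ε : ℝ) (hε : 0 < ε)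
    (p : A) (hp : IsProjection p) (t : A) (ht : AlmostRegular ε t) :
    AlmostRegular ε (t * p) := by
  intro I
  have hI := ht I
  obtain ⟨hps, hpi⟩ := hp
  have hps : star p = p := hps
  have hpi : p * p = p := hpi
  rw [aux_char I ε hε, aux_char I ε hε] at *
  have s1 : star (t * p) * (t * p) = p * star t * t * p := by
    rw [star_mul, hps]; noncomm_ring
  have s2 : star (star (t * p)) * star (t * p) = t * p * star t := by
    rw [star_star, star_mul, hps, mul_assoc, ← mul_assoc p, hpi, mul_assoc]
  rw [star_star] at hI
  rw [s1, s2]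
  -- differences lie in I once `1 - p` does
  have d1 : 1 - p ∈ I.carrier → star t * t - p * star t * t * p ∈ I.carrier := by
    intro h
    have : star t * t - p * star t * t * p
      = (1 - p) * (star t * t) + (p * star t * t) * (1 - p) := by noncomm_ring
    rw [this]
    exact add_mem (I.mul_right_mem _ _ h) (I.mul_left_mem _ _ h)
  have d2 : 1 - p ∈ I.carrier → t * star t - t * p * star t ∈ I.carrier := by
    intro h
    have : t * star t - t * p * star t = t * (1 - p) * star t := by noncomm_ring
    rw [this]
    exact I.mul_right_mem _ _ (I.mul_left_mem _ _ h)
  constructor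
  · rintro ⟨y, hy, hle⟩
    obtain ⟨b, hb, -⟩ := aux_inv I ε hε _ y hy hle
    have h1 : 1 - p ∈ I.carrier := by
      have := I.mul_right_mem (1 - p) _ hb
      have e : (1 - b * (p * star t * t * p)) * (1 - p)
        = 1 - p - b * (p * star t * t * (p - p * p)) := by noncomm_ring
      rwa [e, hpi, sub_self, mul_zero, mul_zero, sub_zero] at this
    obtain ⟨z, hz, hzle⟩ := hI.1 ⟨y - (star t * t - p * star t * t * p), sub_mem hy (d1 h1), by
      convert hle using 1; abel⟩
    exact ⟨z + (t * star t - t * p * star t), add_mem hz (d2 h1), by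
      convert hzle using 1; abel⟩
  · rintro ⟨y, hy, hle⟩
    have hpt : t * p * star t ≤ t * star t := by
      rw [← sub_nonneg]
      have : t * star t - t * p * star t = star ((1 - p) * star t) * ((1 - p) * star t) := by
        rw [star_mul, star_sub, star_star, star_one, hps]
        have : t * (1 - p) * ((1 - p) * star t) = t * (1 - p - p + p * p) * star t := by
          noncomm_ring
        rw [this, hpi]; noncomm_ring
      rw [this]; exact star_mul_self_nonneg _
    obtain ⟨z, hz, hzle⟩ := hI.2 ⟨y, hy, hle.trans (by gcongr)⟩
    obtain ⟨c, -, hc⟩ := aux_inv I ε hε _ y hy hle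
    obtain ⟨b, hb, -⟩ := aux_inv I ε hε _ z hz hzle
    have h1 : 1 - p ∈ I.carrier := by
      -- `b t* t ≡ 1`, `t p t* c ≡ 1`
      have m1 := I.mul_left_mem (1 - p) _ hb
      have m2 := I.mul_right_mem t _ (I.mul_left_mem ((1 - p) * (b * star t)) _ hc)
      have m3 := I.mul_right_mem (p * star t * c * t) _ (I.mul_left_mem (1 - p) _ hb)
      have e : 1 - p = (1 - p) * (1 - b * (star t * t))
          + (1 - p) * (b * star t) * (1 - t * p * star t * c) * t
          - (1 - p) * (1 - b * (star t * t)) * (p * star t * c * t)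
          + (p - p * p) * (star t * c * t) := by noncomm_ring
      rw [hpi, sub_self, zero_mul, add_zero] at e
      rw [e]
      exact sub_mem (add_mem m1 m2) m3
    exact ⟨z + (star t * t - p * star t * t * p), add_mem hz (d1 h1), by
      convert hzle using 1; abel⟩

end aux

theorem aux_reg {A : Type*} [CStarAlgebra A]
    (p : A) (hp : IsProjection p) (t : A) (ht : t ∈ regSet A) : t * p ∈ regSet A := by
  intro I h
  have hpi : p * p = p := hp.2
  have fin : 1 - p ∈ I.carrier → (∃ b, 1 - b * t ∈ I.carrier ∧ 1 - t * b ∈ I.carrier) →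
      ∃ b, 1 - b * (t * p) ∈ I.carrier ∧ 1 - t * p * b ∈ I.carrier := by
    rintro h1 ⟨b, hb, hb'⟩
    refine ⟨b, ?_, ?_⟩
    · have : 1 - b * (t * p) = (1 - b * t) + b * t * (1 - p) := by noncomm_ring
      rw [this]; exact add_mem hb (I.mul_left_mem _ _ h1)
    · have : 1 - t * p * b = (1 - t * b) + t * (1 - p) * b := by noncomm_ring
      rw [this]; exact add_mem hb' (I.mul_right_mem _ _ (I.mul_left_mem _ _ h1))
  rcases h with ⟨b, hb⟩ | ⟨b, hb⟩
  · have h1 : 1 - p ∈ I.carrier := by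
      have := I.mul_right_mem (1 - p) _ hb
      have e : (1 - b * (t * p)) * (1 - p) = 1 - p - b * (t * (p - p * p)) := by noncomm_ring
      rwa [e, hpi, sub_self, mul_zero, mul_zero, sub_zero] at this
    refine fin h1 (ht I (Or.inl ⟨b, ?_⟩))
    have : 1 - b * t = (1 - b * (t * p)) - b * t * (1 - p) := by noncomm_ring
    rw [this]; exact sub_mem hb (I.mul_left_mem _ _ h1)
  · obtain ⟨s, hs, hs'⟩ := ht I (Or.inr ⟨p * b, by rwa [← mul_assoc]⟩)
    refine fin ?_ ⟨s, hs, hs'⟩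
    have m1 := I.mul_left_mem (1 - p) _ hs
    have m2 := I.mul_right_mem t _ (I.mul_left_mem ((1 - p) * s) _ hb)
    have m3 := I.mul_right_mem (p * b * t) _ (I.mul_left_mem (1 - p) _ hs)
    have e : 1 - p = (1 - p) * (1 - s * t) + (1 - p) * s * (1 - t * p * b) * t
        - (1 - p) * (1 - s * t) * (p * b * t) + (p - p * p) * (b * t) := by noncomm_ring
    rw [hpi, sub_self, zero_mul, add_zero] at e
    rw [e]
    exact sub_mem (add_mem m1 m2) m3

/-- If `t` is `ε`-almost regular and `p` is a projection, then `t * p` is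
`ε`-almost regular; and if `t ∈ R(A)`, then `t * p ∈ R(A)`. -/
theorem almostRegular_mul_proj {A : Type*} [CStarAlgebra A] (ε : ℝ) (hε : 0 < ε)
    (p : A) (hp : IsProjection p) (t : A) :
    (AlmostRegular ε t → AlmostRegular ε (t * p)) ∧
    (t ∈ regSet A → t * p ∈ regSet A) := by
  letI : PartialOrder A := CStarAlgebra.spectralOrder A
  haveI : StarOrderedRing A := CStarAlgebra.spectralOrderedRing A
  exact ⟨aux_main ε hε p hp t, aux_reg p hp t⟩
end
end

section
/- Let I be a closed two-sided ideal of a unital C*-algebra A and let ε > 0. Then every element of R(A/I) is the image under the quotient map of an ε-almost regular element of A. -/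
noncomputable section

def FF {A : Type*} [CStarAlgebra A] (δ : ℝ) (a : A) : A :=
  cfc (fun x : ℝ => max (δ - Real.sqrt x) 0) a

lemma FF_eq {A : Type*} [CStarAlgebra A] (δ : ℝ) (t : A) :
    cfc (fun x : ℝ => max (δ - x) 0) (cstarAbs t) = FF δ (star t * t) := by
  unfold cstarAbs FF
  rw [← cfc_comp' (fun x : ℝ => max (δ - x) 0) Real.sqrt (star t * t)
    (by fun_prop) (by fun_prop) (IsSelfAdjoint.star_mul_self t)]

lemma spec_nonneg {A : Type*} [CStarAlgebra A] (t : A) {x : ℝ}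
    (hx : x ∈ spectrum ℝ (star t * t)) : 0 ≤ x :=
  spectrum_star_mul_self_nonneg x hx

lemma intertwine {A : Type*} [CStarAlgebra A] (t : A) (f : ℝ → ℝ) (hf : Continuous f) :
    t * cfc f (star t * t) = cfc f (t * star t) * t := by
  have h1 : IsSelfAdjoint (star t * t) := IsSelfAdjoint.star_mul_self t
  have h2 : IsSelfAdjoint (t * star t) := IsSelfAdjoint.mul_star_self t
  have hpoly : ∀ p : Polynomial ℝ, t * Polynomial.aeval (star t * t) p
      = Polynomial.aeval (t * star t) p * t := by
    intro p
    induction p using Polynomial.induction_on' with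
    | add p q hp hq => simp [mul_add, add_mul, hp, hq]
    | monomial n r =>
      simp only [Polynomial.aeval_monomial]
      have : t * (star t * t) ^ n = (t * star t) ^ n * t := by
        induction n with
        | zero => simp
        | succ n ih => rw [pow_succ, ← mul_assoc, ih, pow_succ]; simp only [mul_assoc]
      rw [← mul_assoc, ← Algebra.commutes, mul_assoc, this, mul_assoc]
  set M := ‖star t * t‖ * ‖(1 : A)‖ + ‖t * star t‖ * ‖(1 : A)‖ with hM
  have hs1 : ∀ x ∈ spectrum ℝ (star t * t), x ∈ Set.Icc (-M) M := by
    intro x hx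
    have := spectrum.norm_le_norm_mul_of_mem hx
    rw [Real.norm_eq_abs] at this
    have h3 : 0 ≤ ‖t * star t‖ * ‖(1 : A)‖ := by positivity
    exact abs_le.mp (by linarith)
  have hs2 : ∀ x ∈ spectrum ℝ (t * star t), x ∈ Set.Icc (-M) M := by
    intro x hx
    have := spectrum.norm_le_norm_mul_of_mem hx
    rw [Real.norm_eq_abs] at this
    have h3 : 0 ≤ ‖star t * t‖ * ‖(1 : A)‖ := by positivity
    exact abs_le.mp (by linarith)
  rw [← sub_eq_zero, ← norm_le_zero_iff]
  refine le_of_forall_pos_le_add fun e he => ?_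
  set k := e / (2 * (‖t‖ + 1)) with hk
  have hkpos : 0 < k := by positivity
  obtain ⟨p, hp⟩ := exists_polynomial_near_of_continuousOn (-M) M f hf.continuousOn k hkpos
  have key : ∀ a : A, IsSelfAdjoint a → (∀ x ∈ spectrum ℝ a, x ∈ Set.Icc (-M) M) →
      ‖cfc f a - Polynomial.aeval a p‖ ≤ k := by
    intro a ha hs
    rw [← cfc_polynomial p a ha, ← cfc_sub f p.eval a (by fun_prop) (by fun_prop)]
    refine norm_cfc_le hkpos.le fun x hx => ?_
    rw [Real.norm_eq_abs, abs_sub_comm]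
    exact (hp x (hs x hx)).le
  have e1 : t * cfc f (star t * t) - cfc f (t * star t) * t
      = t * (cfc f (star t * t) - Polynomial.aeval (star t * t) p)
        - (cfc f (t * star t) - Polynomial.aeval (t * star t) p) * t := by
    rw [mul_sub, sub_mul, hpoly]; abel
  rw [e1]
  have b1 := key _ h1 hs1
  have b2 := key _ h2 hs2
  calc _ ≤ ‖t‖ * k + k * ‖t‖ := (norm_sub_le _ _).trans (add_le_add
        ((norm_mul_le _ _).trans (by gcongr)) ((norm_mul_le _ _).trans (by gcongr)))
    _ ≤ 2 * (‖t‖ + 1) * k := by nlinarith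
    _ = e := by rw [hk]; field_simp
    _ ≤ 0 + e := by simp

lemma max_ne {δ : ℝ} (hδ : 0 < δ) (x : ℝ) : max x δ ≠ 0 :=
  (lt_of_lt_of_le hδ (le_max_right _ _)).ne'

/-- norm of `t * g(t* t)` -/
lemma norm_mul_cfc {A : Type*} [CStarAlgebra A] (t : A) (g : ℝ → ℝ) (hg : Continuous g)
    (k : ℝ) (hk : 0 ≤ k) (h : ∀ x, 0 ≤ x → g x ^ 2 * x ≤ k ^ 2) :
    ‖t * cfc g (star t * t)‖ ≤ k := by
  have h1 : IsSelfAdjoint (star t * t) := IsSelfAdjoint.star_mul_self t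
  have hsa : star (cfc g (star t * t)) = cfc g (star t * t) := (IsSelfAdjoint.cfc : _)
  have e : star (t * cfc g (star t * t)) * (t * cfc g (star t * t))
      = cfc (fun x => g x * (x * g x)) (star t * t) := by
    rw [cfc_mul g (fun x => x * g x) _ (by fun_prop) (by fun_prop),
      cfc_mul (fun x => x) g _ (by fun_prop) (by fun_prop), cfc_id' ℝ (star t * t), star_mul, hsa]
    simp only [mul_assoc]
  have := CStarRing.norm_star_mul_self (x := t * cfc g (star t * t))
  rw [e] at this
  have h3 : ‖cfc (fun x => g x * (x * g x)) (star t * t)‖ ≤ k ^ 2 := by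
    refine norm_cfc_le (by positivity) fun x hx => ?_
    have hx0 := spec_nonneg t hx
    rw [Real.norm_eq_abs, abs_of_nonneg (by nlinarith [mul_nonneg hx0 (sq_nonneg (g x))])]
    nlinarith [h x hx0]
  rw [this] at h3
  exact abs_le_of_sq_le_sq' (by nlinarith) hk |>.2

lemma left_inv {A : Type*} [CStarAlgebra A] (t : A) (ε : ℝ) (hε : 0 < ε) (J : ClosedIdeal A)
    (h : FF ε (star t * t) ∈ J.carrier) : ∃ b, 1 - b * t ∈ J.carrier ∧ ‖b‖ ≤ 1 / ε := by
  have h1 : IsSelfAdjoint (star t * t) := IsSelfAdjoint.star_mul_self t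
  have hε2 : 0 < ε ^ 2 := by positivity
  set g : ℝ → ℝ := fun x => (max x (ε ^ 2))⁻¹ with hgdef
  have hg : Continuous g := Continuous.inv₀ (by fun_prop) (max_ne hε2)
  have hsa : star (cfc g (star t * t)) = cfc g (star t * t) := (IsSelfAdjoint.cfc : _)
  refine ⟨cfc g (star t * t) * star t, ?_, ?_⟩
  · have : 1 - cfc g (star t * t) * star t * t
        = cfc (fun x : ℝ => (ε + Real.sqrt x) / ε ^ 2) (star t * t) * FF ε (star t * t) := by
      unfold FF
      rw [← cfc_mul _ _ _ (by fun_prop) (by fun_prop), mul_assoc]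
      conv_lhs => rw [← cfc_id' ℝ (star t * t) h1, cfc_id' ℝ (star t * t) h1]
      have e2 : cfc g (star t * t) * (star t * t) = cfc (fun x => g x * x) (star t * t) := by
        rw [cfc_mul g (fun x => x) _ (by fun_prop) (by fun_prop), cfc_id' ℝ (star t * t)]
      rw [e2, ← cfc_const_one ℝ (star t * t), ← cfc_sub _ _ _ (by fun_prop) (by fun_prop)]
      refine cfc_congr fun x hx => ?_
      have hx0 := spec_nonneg t hx
      have hq := Real.sq_sqrt hx0
      have hq0 := Real.sqrt_nonneg x
      simp only [hgdef]
      rcases le_total (Real.sqrt x) ε with hc | hc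
      · rw [max_eq_left (a := ε - Real.sqrt x) (by linarith), max_eq_right (a := x) (by nlinarith)]
        field_simp
        nlinarith
      · have : ε ^ 2 ≤ x := by nlinarith
        have : 0 < x := by linarith
        rw [max_eq_right (a := ε - Real.sqrt x) (by linarith), max_eq_left (a := x) (by nlinarith)]
        field_simp
        try simp
    rw [this]
    exact J.mul_left_mem _ _ h
  · have : ‖t * cfc g (star t * t)‖ ≤ 1 / ε := by
      refine norm_mul_cfc t g hg _ (by positivity) fun x hx => ?_
      simp only [hgdef]
      have hm : 0 < max x (ε ^ 2) := lt_of_lt_of_le hε2 (le_max_right _ _)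
      have h4 : x ≤ max x (ε ^ 2) := le_max_left _ _
      have h5 : ε ^ 2 ≤ max x (ε ^ 2) := le_max_right _ _
      rw [inv_pow, one_div, inv_pow, inv_mul_le_iff₀ (by positivity), ← div_eq_mul_inv,
        le_div_iff₀ hε2]
      nlinarith
    rw [← norm_star, star_mul, star_star, hsa]
    exact this

lemma FF_star_mem {A : Type*} [CStarAlgebra A] (t : A) (ε : ℝ) (J : ClosedIdeal A)
    (h : FF ε (star t * t) ∈ J.carrier) (b : A) (hb : 1 - t * b ∈ J.carrier) :
    FF ε (t * star t) ∈ J.carrier := by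
  have e := intertwine t (fun x : ℝ => max (ε - Real.sqrt x) 0) (by fun_prop)
  change t * FF ε (star t * t) = FF ε (t * star t) * t at e
  have h1 : FF ε (t * star t) = FF ε (t * star t) * (1 - t * b) + t * FF ε (star t * t) * b := by
    rw [e]; noncomm_ring
  rw [h1]
  exact J.carrier.add_mem (J.mul_left_mem _ _ hb) (J.mul_right_mem _ _ (J.mul_left_mem _ _ h))

lemma FF_shrink {A : Type*} [CStarAlgebra A] (t g : A) (ε δ : ℝ) (hδ : 0 < δ) (hδε : δ < ε)
    (J : ClosedIdeal A) (hg : 1 - g * t ∈ J.carrier) (hgn : ‖g‖ ≤ 1 / ε) :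
    FF δ (star t * t) ∈ J.carrier := by
  have hε : 0 < ε := hδ.trans hδε
  set χ : ℝ → ℝ := fun x => δ * (max (Real.sqrt x) δ)⁻¹ with hχdef
  have hχ : Continuous χ := continuous_const.mul (Continuous.inv₀ (by fun_prop) fun x => max_ne hδ _)
  set X := cfc χ (star t * t) with hX
  have e1 : X * FF δ (star t * t) = FF δ (star t * t) := by
    unfold FF
    rw [hX, ← cfc_mul _ _ _ (by fun_prop) (by fun_prop)]
    refine cfc_congr fun x hx => ?_
    simp only [hχdef]
    rcases le_total (Real.sqrt x) δ with hc | hc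
    · rw [max_eq_right hc]; field_simp
    · rw [max_eq_right (a := δ - Real.sqrt x) (by linarith)]; simp
  have n1 : ‖t * X‖ ≤ δ := by
    refine norm_mul_cfc t χ hχ δ hδ.le fun x hx => ?_
    have hm : 0 < max (Real.sqrt x) δ := lt_of_lt_of_le hδ (le_max_right _ _)
    have h4 : Real.sqrt x ≤ max (Real.sqrt x) δ := le_max_left _ _
    have h5 := Real.sq_sqrt hx
    have h6 := Real.sqrt_nonneg x
    simp only [hχdef]
    rw [mul_pow, inv_pow, mul_assoc]
    refine mul_le_of_le_one_right (by positivity) ?_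
    rw [inv_mul_le_iff₀ (by positivity)]
    nlinarith
  have n2 : ‖g * (t * X)‖ < 1 := by
    calc _ ≤ (1 / ε) * δ := (norm_mul_le _ _).trans (by gcongr)
      _ < 1 := by rw [one_div, inv_mul_lt_iff₀ hε]; linarith
  have hu := isUnit_one_sub_of_norm_lt_one n2
  obtain ⟨v, hv⟩ := hu.exists_left_inv
  have h1 : FF δ (star t * t) = v * ((1 - g * t) * FF δ (star t * t)) := by
    calc _ = v * (1 - g * (t * X)) * FF δ (star t * t) := by rw [hv, one_mul]
      _ = v * (FF δ (star t * t) - g * t * (X * FF δ (star t * t))) := by noncomm_ring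
      _ = _ := by rw [e1]; noncomm_ring
  rw [h1]
  exact J.mul_left_mem _ _ (J.mul_right_mem _ _ hg)

lemma right_inv_of_close {A : Type*} [CStarAlgebra A] (t r : A) (δ : ℝ) (hδ : 0 < δ)
    (J : ClosedIdeal A) (hm : FF δ (t * star t) - r ∈ J.carrier) (hr : ‖r‖ < δ) :
    ∃ b, 1 - t * b ∈ J.carrier := by
  have h1 : IsSelfAdjoint (t * star t) := IsSelfAdjoint.mul_star_self t
  set a := t * star t with ha
  set m := FF δ a - r with hmdef
  set q := cfc Real.sqrt a with hq
  set p := cfc (fun x : ℝ => max (Real.sqrt x) δ) a with hp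
  have hc : Continuous (fun x : ℝ => (max (Real.sqrt x) δ)⁻¹) :=
    Continuous.inv₀ (by fun_prop) fun x => max_ne hδ _
  set p' := cfc (fun x : ℝ => (max (Real.sqrt x) δ)⁻¹) a with hp'
  have pp : p * p' = 1 := by
    rw [hp, hp', ← cfc_mul _ _ _ (by fun_prop) hc.continuousOn, ← cfc_const_one ℝ a]
    exact cfc_congr fun x _ => mul_inv_cancel₀ (max_ne hδ _)
  have np : ‖p'‖ ≤ 1 / δ := by
    refine norm_cfc_le (by positivity) fun x _ => ?_
    have hm : δ ≤ max (Real.sqrt x) δ := le_max_right _ _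
    rw [norm_inv, one_div, Real.norm_eq_abs, abs_of_pos (by linarith)]
    exact inv_anti₀ hδ hm
  have qe : q = p - FF δ a := by
    unfold FF
    rw [hq, hp, ← cfc_sub _ _ _ (by fun_prop) (by fun_prop)]
    refine cfc_congr fun x _ => ?_
    rcases le_total (Real.sqrt x) δ with hc | hc
    · rw [max_eq_right hc, max_eq_left (by linarith)]; ring
    · rw [max_eq_left hc, max_eq_right (by linarith)]; ring
  have qq : q * q = t * star t := by
    rw [hq, ← cfc_mul _ _ _ (by fun_prop) (by fun_prop)]
    conv_rhs => rw [← ha, ← cfc_id' ℝ a h1]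
    refine cfc_congr fun x hx => ?_
    have : 0 ≤ x := spec_nonneg (star t) (by rwa [star_star])
    exact Real.mul_self_sqrt this
  have n2 : ‖p' * r‖ < 1 := by
    calc _ ≤ (1 / δ) * ‖r‖ := (norm_mul_le _ _).trans (by gcongr)
      _ < 1 := by rw [one_div, inv_mul_lt_iff₀ hδ]; linarith
  obtain ⟨v, hv⟩ := (isUnit_one_sub_of_norm_lt_one n2).exists_right_inv
  set w := v * p' with hw
  have hqw : 1 - q * w ∈ J.carrier := by
    have : 1 - q * w = m * w := by
      have e3 : q = p * (1 - p' * r) - m := by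
        rw [mul_sub, ← mul_assoc, pp, qe, hmdef]; noncomm_ring
      have e4 : p * (1 - p' * r) * w = 1 := by
        rw [hw, mul_assoc, ← mul_assoc (1 - p' * r), hv, one_mul, pp]
      rw [e3, sub_mul, e4]; noncomm_ring
    rw [this]
    exact J.mul_right_mem _ _ hm
  refine ⟨star t * w * w, ?_⟩
  have : 1 - t * (star t * w * w) = (1 - q * w) + q * (1 - q * w) * w := by
    have : t * (star t * w * w) = q * q * w * w := by rw [qq]; noncomm_ring
    rw [this]; noncomm_ring
  rw [this]
  exact J.carrier.add_mem hqw (J.mul_right_mem _ _ (J.mul_left_mem _ _ hqw))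

lemma key {A : Type*} [CStarAlgebra A] (t c d : A) (hcd : c * d = 1) (hdc : d * c = 1)
    (hc : ‖c‖ ≤ 1) (ε C : ℝ) (hε : 0 < ε) (hC : ‖t‖ ≤ C) (l : A)
    (hl : ∀ J : ClosedIdeal A, FF (ε / 2) (star t * t) ∈ J.carrier → l ∈ J.carrier)
    (hz : ‖(FF (ε / 2) (t * star t) - l) * c‖ * C < ε * (ε / 2)) (J : ClosedIdeal A)
    (h : FF ε (star (c * t * c) * (c * t * c)) ∈ J.carrier) :
    FF ε ((c * t * c) * star (c * t * c)) ∈ J.carrier := by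
  obtain ⟨b, hb, hbn⟩ := left_inv _ ε hε J h
  have hC0 : 0 ≤ C := (norm_nonneg _).trans hC
  have hg : 1 - (c * b * c) * t ∈ J.carrier := by
    have : 1 - (c * b * c) * t = c * (1 - b * (c * t * c)) * d := by
      have : c * (1 - b * (c * t * c)) * d = c * d - c * b * c * t * (c * d) := by noncomm_ring
      rw [this, hcd, mul_one]
    rw [this]
    exact J.mul_right_mem _ _ (J.mul_left_mem _ _ hb)
  have hgn : ‖c * b * c‖ ≤ 1 / ε := by
    calc _ ≤ ‖c‖ * ‖b‖ * ‖c‖ := (norm_mul_le _ _).trans (by gcongr; exact norm_mul_le _ _)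
      _ ≤ 1 * (1 / ε) * 1 := by gcongr
      _ = _ := by ring
  have hl' := hl J (FF_shrink t _ ε (ε / 2) (by linarith) (by linarith) J hg hgn)
  set F := FF (ε / 2) (t * star t) with hF
  set D := b * c * t with hD
  have hcD : 1 - c * D ∈ J.carrier := by
    have : 1 - c * D = 1 - (c * b * c) * t := by rw [hD]; noncomm_ring
    rw [this]; exact hg
  have hDn : ‖D‖ ≤ C / ε := by
    calc _ ≤ ‖b‖ * ‖c‖ * ‖t‖ := (norm_mul_le _ _).trans (by gcongr; exact norm_mul_le _ _)
      _ ≤ (1 / ε) * 1 * C := by gcongr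
      _ = _ := by ring
  obtain ⟨b', hb'⟩ := right_inv_of_close t ((F - l) * c * D) (ε / 2) (by linarith) J
    (by
      have : FF (ε / 2) (t * star t) - (F - l) * c * D = F * (1 - c * D) + l * (c * D) := by
        rw [← hF]; noncomm_ring
      rw [this]
      exact J.carrier.add_mem (J.mul_left_mem _ _ hcD) (J.mul_right_mem _ _ hl'))
    (by
      calc _ ≤ ‖(F - l) * c‖ * (C / ε) := (norm_mul_le _ _).trans (by gcongr)
        _ < ε / 2 := by rw [← mul_div_assoc, div_lt_iff₀ hε]; linarith)
  refine FF_star_mem _ ε J h (d * b' * d) ?_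
  have : 1 - c * t * c * (d * b' * d) = c * (1 - t * b') * d := by
    have e1 : c * t * c * (d * b' * d) = c * t * (c * d) * b' * d := by noncomm_ring
    have e2 : c * (1 - t * b') * d = c * d - c * t * b' * d := by noncomm_ring
    rw [e1, e2, hcd, mul_one]
  rw [this]
  exact J.mul_right_mem _ _ (J.mul_left_mem _ _ hb')

def genIdeal {A : Type*} [CStarAlgebra A] (g : A) : Submodule ℂ A :=
  Submodule.span ℂ (Set.range fun p : A × A => p.1 * g * p.2)

lemma genIdeal_left {A : Type*} [CStarAlgebra A] (g a x : A) (hx : x ∈ genIdeal g) :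
    a * x ∈ genIdeal g := by
  unfold genIdeal at *
  induction hx using Submodule.span_induction with
  | mem x h =>
    obtain ⟨p, rfl⟩ := h
    exact Submodule.subset_span ⟨(a * p.1, p.2), by simp only [mul_assoc]⟩
  | zero => simp
  | add x y _ _ h1 h2 => rw [mul_add]; exact Submodule.add_mem _ h1 h2
  | smul r x _ h => rw [mul_smul_comm]; exact Submodule.smul_mem _ _ h

lemma genIdeal_right {A : Type*} [CStarAlgebra A] (g a x : A) (hx : x ∈ genIdeal g) :
    x * a ∈ genIdeal g := by
  unfold genIdeal at *
  induction hx using Submodule.span_induction with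
  | mem x h =>
    obtain ⟨p, rfl⟩ := h
    exact Submodule.subset_span ⟨(p.1, p.2 * a), by simp only [mul_assoc]⟩
  | zero => simp
  | add x y _ _ h1 h2 => rw [add_mul]; exact Submodule.add_mem _ h1 h2
  | smul r x _ h => rw [smul_mul_assoc]; exact Submodule.smul_mem _ _ h

lemma genIdeal_le {A : Type*} [CStarAlgebra A] (g : A) (J : ClosedIdeal A) (hg : g ∈ J.carrier) :
    genIdeal g ≤ J.carrier := by
  refine Submodule.span_le.mpr ?_
  rintro _ ⟨p, rfl⟩
  exact J.mul_right_mem _ _ (J.mul_left_mem _ _ hg)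

def genClosed {A : Type*} [CStarAlgebra A] (g : A) : ClosedIdeal A where
  carrier := (genIdeal g).topologicalClosure
  mul_left_mem a x hx :=
    map_mem_closure (f := fun y => a * y) (by fun_prop) hx fun y hy => genIdeal_left g a y hy
  mul_right_mem a x hx :=
    map_mem_closure (f := fun y => y * a) (by fun_prop) hx fun y hy => genIdeal_right g a y hy
  isClosed := Submodule.isClosed_topologicalClosure _

lemma mem_genClosed {A : Type*} [CStarAlgebra A] (g : A) : g ∈ (genClosed g).carrier :=
  Submodule.le_topologicalClosure _ (Submodule.subset_span ⟨(1, 1), by simp⟩)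

def starIdeal {A : Type*} [CStarAlgebra A] (J : ClosedIdeal A) : ClosedIdeal A where
  carrier :=
    { carrier := {x | star x ∈ J.carrier}
      add_mem' := fun {a b} ha hb => by
        simp only [Set.mem_ofPred_eq, star_add] at *; exact J.carrier.add_mem ha hb
      zero_mem' := by simp
      smul_mem' := fun r x hx => by
        simp only [Set.mem_ofPred_eq, star_smul] at *; exact J.carrier.smul_mem _ hx }
  mul_left_mem a x hx := by
    change star (a * x) ∈ J.carrier
    rw [star_mul]; exact J.mul_right_mem _ _ hx
  mul_right_mem a x hx := by
    change star (x * a) ∈ J.carrier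
    rw [star_mul]; exact J.mul_left_mem _ _ hx
  isClosed := J.isClosed.preimage continuous_star

lemma regSet_star {A : Type*} [CStarAlgebra A] (s : A) (hs : s ∈ regSet A) :
    star s ∈ regSet A := by
  intro J h
  have hmem : ∀ x, x ∈ (starIdeal J).carrier ↔ star x ∈ J.carrier := fun x => Iff.rfl
  obtain ⟨b, h1, h2⟩ := hs (starIdeal J) (by
    rcases h with ⟨b, hb⟩ | ⟨b, hb⟩
    · right; refine ⟨star b, ?_⟩; rw [hmem]; simpa using hb
    · left; refine ⟨star b, ?_⟩; rw [hmem]; simpa using hb)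
  rw [hmem] at h1 h2
  exact ⟨star b, by simpa using h2, by simpa using h1⟩

attribute [local instance] CStarAlgebra.spectralOrder CStarAlgebra.spectralOrderedRing

lemma exists_l {A Q : Type*} [CStarAlgebra A] [CStarAlgebra Q] (π : A →⋆ₐ[ℂ] Q)
    (hsurj : Function.Surjective π) (t : A) (hs : π t ∈ regSet Q) (δ η : ℝ) (hδ : 0 < δ)
    (hη : 0 < η) : ∃ l : A,
      (∀ J : ClosedIdeal A, FF δ (star t * t) ∈ J.carrier → l ∈ J.carrier) ∧
      ‖π (FF δ (t * star t) - l)‖ ≤ η := by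
  have hcont : Continuous π := map_continuous π
  have hmap : ∀ a : A, IsSelfAdjoint a → π (FF δ a) = FF δ (π a) := by
    intro a ha
    unfold FF
    exact StarAlgHomClass.map_cfc π _ a (by fun_prop) hcont ha (ha.map π)
  set s := π t with hsdef
  set g := FF δ (star s * s) with hg
  have hgm := mem_genClosed g
  obtain ⟨b, hb, -⟩ := left_inv s δ hδ (genClosed g) hgm
  obtain ⟨b', -, hb'⟩ := hs (genClosed g) (Or.inl ⟨b, hb⟩)
  have hm := FF_star_mem s δ (genClosed g) hgm b' hb'
  obtain ⟨y, hy, hyd⟩ := Metric.mem_closure_iff.mp hm η hη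
  have hlift : ∃ l ∈ genIdeal (FF δ (star t * t)), π l = y := by
    have hy' : y ∈ genIdeal g := hy
    clear hyd hy
    unfold genIdeal at hy'
    induction hy' using Submodule.span_induction with
    | mem x h =>
      obtain ⟨p, rfl⟩ := h
      obtain ⟨p1, h1⟩ := hsurj p.1
      obtain ⟨p2, h2⟩ := hsurj p.2
      refine ⟨p1 * FF δ (star t * t) * p2, Submodule.subset_span ⟨(p1, p2), rfl⟩, ?_⟩
      rw [map_mul, map_mul, h1, h2, hmap _ (IsSelfAdjoint.star_mul_self t), map_mul, map_star]
    | zero => exact ⟨0, Submodule.zero_mem _, map_zero _⟩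
    | add x y _ _ h1 h2 =>
      obtain ⟨l1, m1, rfl⟩ := h1
      obtain ⟨l2, m2, rfl⟩ := h2
      exact ⟨l1 + l2, Submodule.add_mem _ m1 m2, map_add _ _ _⟩
    | smul r x _ h =>
      obtain ⟨l1, m1, rfl⟩ := h
      exact ⟨r • l1, Submodule.smul_mem _ r m1, map_smul _ _ _⟩
  obtain ⟨l, hl, rfl⟩ := hlift
  refine ⟨l, fun J hJ => genIdeal_le _ J hJ hl, ?_⟩
  rw [map_sub, hmap _ (IsSelfAdjoint.mul_star_self t), map_mul, map_star, ← dist_eq_norm]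
  exact hyd.le

lemma exists_c {A Q : Type*} [CStarAlgebra A] [CStarAlgebra Q] (π : A →⋆ₐ[ℂ] Q)
    (z₁ z₂ : A) (η : ℝ) (hη : 0 < η) (h1 : ‖π z₁‖ ≤ η) (h2 : ‖π z₂‖ ≤ η) :
    ∃ c d : A, star c = c ∧ c * d = 1 ∧ d * c = 1 ∧ ‖c‖ ≤ 1 ∧ π c = 1 ∧
      ‖z₁ * c‖ ≤ 2 * η ∧ ‖z₂ * c‖ ≤ 2 * η := by
  set w := star z₁ * z₁ + star z₂ * z₂ with hw
  have hwsa : IsSelfAdjoint w := (IsSelfAdjoint.star_mul_self _).add (IsSelfAdjoint.star_mul_self _)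
  set k := 2 * η ^ 2 with hk
  have hk0 : 0 < k := by positivity
  have hπw : ‖π w‖ ≤ k := by
    rw [hw, map_add, map_mul, map_mul, map_star, map_star]
    refine (norm_add_le _ _).trans ?_
    rw [CStarRing.norm_star_mul_self, CStarRing.norm_star_mul_self]
    nlinarith [norm_nonneg (π z₁), norm_nonneg (π z₂)]
  set f : ℝ → ℝ := fun x => k * (max x k)⁻¹ with hf
  have hfc : Continuous f := continuous_const.mul (Continuous.inv₀ (by fun_prop) fun x => max_ne hk0 _)
  set c := cfc f w with hc
  set d := cfc (fun x : ℝ => k⁻¹ * max x k) w with hd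
  have hsa : star c = c := (IsSelfAdjoint.cfc : _)
  have f0 : ∀ x, 0 < f x := fun x => by
    have : 0 < max x k := lt_of_lt_of_le hk0 (le_max_right _ _)
    simp only [hf]; positivity
  have f1 : ∀ x, f x ≤ 1 := fun x => by
    have h : k ≤ max x k := (le_max_right _ _)
    simp only [hf]
    rw [mul_inv_le_iff₀ (by linarith)]; linarith
  have f2 : ∀ x, x * f x ≤ k := fun x => by
    have h : k ≤ max x k := (le_max_right _ _)
    have h' : x ≤ max x k := (le_max_left _ _)
    simp only [hf]
    rw [← mul_assoc, mul_inv_le_iff₀ (by linarith)]; nlinarith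
  have hcd : c * d = 1 := by
    rw [hc, hd, ← cfc_mul _ _ _ (by fun_prop) (by fun_prop), ← cfc_const_one ℝ w]
    refine cfc_congr fun x _ => ?_
    have := max_ne hk0 x
    simp only [hf]
    field_simp
  have hdc : d * c = 1 := by
    rw [hc, hd, ← cfc_mul _ _ _ (by fun_prop) (by fun_prop), ← cfc_const_one ℝ w]
    refine cfc_congr fun x _ => ?_
    have := max_ne hk0 x
    simp only [hf]
    field_simp
  have w1 : 0 ≤ star z₁ * z₁ := star_mul_self_nonneg _
  have w2 : 0 ≤ star z₂ * z₂ := star_mul_self_nonneg _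
  have w0 : 0 ≤ w := add_nonneg w1 w2
  have hcwc : ‖star c * w * c‖ ≤ k := by
    have : star c * w * c = cfc (fun x => f x * x * f x) w := by
      rw [cfc_mul (fun x => f x * x) f _ (by fun_prop) (by fun_prop),
        cfc_mul f (fun x => x) _ (by fun_prop) (by fun_prop), cfc_id' ℝ w, hsa]
    rw [this]
    refine norm_cfc_le hk0.le fun x hx => ?_
    have hx0 : 0 ≤ x := spectrum_nonneg_of_nonneg w0 hx
    have := f0 x
    rw [Real.norm_eq_abs, abs_of_nonneg (by positivity)]
    calc f x * x * f x = x * f x * f x := by ring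
      _ ≤ k * 1 := by gcongr; exacts [f2 x, f1 x]
      _ = k := mul_one k
  have hzz : ∀ z : A, star z * z ≤ w → ‖z * c‖ ≤ 2 * η := by
    intro z hz
    have e1 : ‖star (z * c) * (z * c)‖ ≤ k := by
      refine le_trans ?_ hcwc
      refine CStarAlgebra.norm_le_norm_of_nonneg_of_le (star_mul_self_nonneg _) ?_
      have := star_left_conjugate_le_conjugate hz c
      rw [star_mul]
      simpa only [mul_assoc] using this
    rw [CStarRing.norm_star_mul_self] at e1
    exact abs_le_of_sq_le_sq' (by nlinarith) (by positivity) |>.2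
  refine ⟨c, d, hsa, hcd, hdc, ?_, ?_, hzz z₁ (le_add_of_nonneg_right w2),
    hzz z₂ (le_add_of_nonneg_left w1)⟩
  · refine norm_cfc_le zero_le_one fun x _ => ?_
    rw [Real.norm_eq_abs, abs_of_pos (f0 x)]
    exact f1 x
  · rw [hc, StarAlgHomClass.map_cfc π f w (by fun_prop) (map_continuous π) hwsa (hwsa.map π),
      ← cfc_const_one ℝ (π w) (hwsa.map π)]
    refine cfc_congr fun x hx => ?_
    have hn : ‖x‖ ≤ ‖π w‖ := by
      rcases subsingleton_or_nontrivial Q with hQ | hQ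
      · simp [spectrum.of_subsingleton] at hx
      exact spectrum.norm_le_norm_of_mem hx
    have : x ≤ k := (le_abs_self x).trans (hn.trans hπw)
    simp only [hf]
    rw [max_eq_right this]
    field_simp

/-- Let `I` be a closed two-sided ideal of a unital C*-algebra `A`, with
quotient map `π : A → A/I` (realized as a surjective star homomorphism onto a unital
C*-algebra `Q` with kernel `I`), and let `ε > 0`.  Every element of `R(A/I)` is the image of
an `ε`-almost regular element of `A`. -/
theorem exists_almostRegular_lift {A : Type*} [CStarAlgebra A] (I : ClosedIdeal A)
    (Q : Type*) [CStarAlgebra Q] (π : A →⋆ₐ[ℂ] Q) (hsurj : Function.Surjective π)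
    (hker : ∀ x : A, π x = 0 ↔ x ∈ I.carrier) (ε : ℝ) (hε : 0 < ε)
    (s : Q) (hs : s ∈ regSet Q) :
    ∃ t : A, AlmostRegular ε t ∧ π t = s := by
  obtain ⟨t, rfl⟩ := hsurj s
  set C := ‖t‖ + 1 with hC
  have hC0 : 0 < C := by positivity
  set η := ε * ε / (8 * C) with hη
  have hη0 : 0 < η := by positivity
  have hηC : 2 * η * C < ε * (ε / 2) := by
    have : η * C = ε * ε / 8 := by rw [hη]; field_simp
    nlinarith [mul_pos hε hε]
  obtain ⟨l₁, hl₁, hn₁⟩ := exists_l π hsurj t hs (ε / 2) η (by linarith) hη0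
  obtain ⟨l₂, hl₂, hn₂⟩ := exists_l π hsurj (star t)
    (by rw [map_star]; exact regSet_star _ hs) (ε / 2) η (by linarith) hη0
  obtain ⟨c, d, hsa, hcd, hdc, hcn, hπc, hz₁, hz₂⟩ := exists_c π _ _ η hη0 hn₁ hn₂
  refine ⟨c * t * c, fun J => ?_, by simp [hπc]⟩
  have hst : star (c * t * c) = c * star t * c := by
    rw [star_mul, star_mul, hsa, mul_assoc]
  rw [FF_eq, FF_eq, star_star]
  refine ⟨key t c d hcd hdc hcn ε C hε (by linarith) l₁ hl₁ ?_ J, fun h => ?_⟩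
  · exact lt_of_le_of_lt (by gcongr) hηC
  · have := key (star t) c d hcd hdc hcn ε C hε (by rw [norm_star]; linarith) l₂ hl₂
      (lt_of_le_of_lt (by gcongr) hηC) J
    rw [← hst, star_star] at this
    exact this h
end
end
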